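/- arXiv:2308.08080 — 2 statements merged into one kernel-verified Lean document; each statement's English description precedes it below -/
import Mathlib

section
/- Let 𝒮 be a triangulated category admitting all small coproducts, equipped with a monoidal structure with unit 1 such that for every object E the endofunctor (−) ⊗ E is exact and preserves small coproducts. If the unit 1 belongs to ⟨A⟩̄_n for some object A and some n ≥ 0, then every object E of 𝒮 belongs to ⟨A ⊗ E⟩̄_n. -/
/-!
Let `F` be an exact functor preserving small coproducts. The objects `X` with `F X ∈ ⟨F G⟩̄₁`
include `G` and are closed under shifts, small coproducts and retracts, so they include `⟨G⟩̄₁`.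
Since `F` also preserves distinguished triangles, induction on `n` shows that `F` maps `⟨G⟩̄ₙ`
into `⟨F G⟩̄ₙ`. For `F = (-) ⊗ E` and `𝟙_ C ∈ ⟨A⟩̄ₙ` this reads `𝟙_ C ⊗ E ∈ ⟨A ⊗ E⟩̄ₙ`, and
`⟨A ⊗ E⟩̄ₙ` is closed under retracts, in particular under the isomorphism `E ≅ 𝟙_ C ⊗ E`.
-/

open CategoryTheory Limits Pretriangulated MonoidalCategory

universe v u v₂ u₂

namespace Stmt

variable {C : Type u} [Category.{v} C]

/-- `X` is a retract (direct summand) of `Y`. -/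
def IsRetract (X Y : C) : Prop := ∃ (i : X ⟶ Y) (p : Y ⟶ X), i ≫ p = 𝟙 X

section Big

variable [HasZeroObject C] [Preadditive C] [HasShift C ℤ]
  [∀ n : ℤ, (shiftFunctor C n).Additive] [Pretriangulated C]

/-- The objects of `⟨G⟩̄₁`: the smallest collection of objects containing `G` that is
closed under shifts, arbitrary small coproducts, and direct summands (retracts). -/
def bigOne (G : C) : Set C :=
  ⋂₀ {S : Set C | G ∈ S ∧ (∀ X ∈ S, ∀ n : ℤ, (X⟦n⟧ : C) ∈ S) ∧
      (∀ (ι : Type v) (f : ι → C) (_ : HasCoproduct f), (∀ i, f i ∈ S) → (∐ f) ∈ S) ∧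
      (∀ X Y : C, Y ∈ S → IsRetract X Y → X ∈ S)}

/-- The objects of `⟨G⟩̄ₙ`: `⟨G⟩̄₀` consists of the objects isomorphic to `0`;
`⟨G⟩̄₁` is `bigOne G`; for `n ≥ 2`, `⟨G⟩̄ₙ` consists of the direct summands of objects `E`
fitting in a distinguished triangle `A ⟶ E ⟶ B ⟶ A⟦1⟧` with `A ∈ ⟨G⟩̄ₙ₋₁` and `B ∈ ⟨G⟩̄₁`. -/
def bigLevel (G : C) : ℕ → Set C
  | 0 => {X | IsZero X}
  | 1 => bigOne G
  | (n + 2) => {X | ∃ (E A B : C) (f : A ⟶ E) (g : E ⟶ B) (h : B ⟶ A⟦(1 : ℤ)⟧),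
      (Triangle.mk f g h ∈ distTriang C) ∧ A ∈ bigLevel G (n + 1) ∧ B ∈ bigOne G ∧
      IsRetract X E}

end Big

section IsRetract

variable {X Y Z : C}

lemma isRetract_iff_nonempty_retract : IsRetract X Y ↔ Nonempty (Retract X Y) :=
  ⟨fun ⟨i, r, hir⟩ ↦ ⟨⟨i, r, hir⟩⟩, fun ⟨h⟩ ↦ ⟨h.i, h.r, h.retract⟩⟩

lemma IsRetract.of_iso (e : X ≅ Y) : IsRetract X Y :=
  isRetract_iff_nonempty_retract.2 ⟨.ofIso e⟩

lemma IsRetract.trans (hXY : IsRetract X Y) (hYZ : IsRetract Y Z) : IsRetract X Z := by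
  rw [isRetract_iff_nonempty_retract] at hXY hYZ ⊢
  exact ⟨hXY.some.trans hYZ.some⟩

lemma IsRetract.map {D : Type u₂} [Category.{v₂} D] (h : IsRetract X Y) (F : C ⥤ D) :
    IsRetract (F.obj X) (F.obj Y) := by
  rw [isRetract_iff_nonempty_retract] at h ⊢
  exact ⟨h.some.map F⟩

lemma IsRetract.isZero [HasZeroMorphisms C] (h : IsRetract X Y) (hY : IsZero Y) : IsZero X := by
  obtain ⟨h⟩ := isRetract_iff_nonempty_retract.1 h
  exact .of_mono h.i hY

end IsRetract

section BigOne

variable [HasShift C ℤ] {G X Y : C}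

lemma self_mem_bigOne (G : C) : G ∈ bigOne G :=
  fun _ hS ↦ hS.1

lemma shift_mem_bigOne (hX : X ∈ bigOne G) (n : ℤ) : X⟦n⟧ ∈ bigOne G :=
  fun S hS ↦ hS.2.1 X (hX S hS) n

lemma coproduct_mem_bigOne {ι : Type v} (f : ι → C) [HasCoproduct f]
    (hf : ∀ i, f i ∈ bigOne G) : ∐ f ∈ bigOne G :=
  fun S hS ↦ hS.2.2.1 ι f ‹_› fun i ↦ hf i S hS

lemma IsRetract.mem_bigOne (h : IsRetract X Y) (hY : Y ∈ bigOne G) : X ∈ bigOne G :=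
  fun S hS ↦ hS.2.2.2 X Y (hY S hS) h

@[elab_as_elim]
lemma bigOne_induction {motive : (X : C) → X ∈ bigOne G → Prop}
    (self : motive G (self_mem_bigOne G))
    (shift : ∀ X hX (n : ℤ), motive X hX → motive (X⟦n⟧) (shift_mem_bigOne hX n))
    (coproduct : ∀ (ι : Type v) (f : ι → C) [HasCoproduct f] (hf : ∀ i, f i ∈ bigOne G),
      (∀ i, motive (f i) (hf i)) → motive (∐ f) (coproduct_mem_bigOne f hf))
    (retract : ∀ X Y (h : IsRetract X Y) hY, motive Y hY → motive X (h.mem_bigOne hY))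
    (hX : X ∈ bigOne G) : motive X hX := by
  refine (hX {Y | ∃ hY, motive Y hY} ⟨⟨_, self⟩, ?_, ?_, ?_⟩).2
  · exact fun X ⟨hX, ih⟩ n ↦ ⟨_, shift X hX n ih⟩
  · exact fun ι f _ hf ↦ ⟨_, coproduct ι f (fun i ↦ (hf i).1) fun i ↦ (hf i).2⟩
  · exact fun X Y ⟨hY, ih⟩ h ↦ ⟨_, retract X Y h hY ih⟩

lemma map_mem_bigOne {D : Type u₂} [Category.{v} D] [HasShift D ℤ] (F : C ⥤ D) [F.CommShift ℤ]
    [∀ J : Type v, PreservesColimitsOfShape (Discrete J) F] (hX : X ∈ bigOne G) :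
    F.obj X ∈ bigOne (F.obj G) := by
  induction hX using bigOne_induction with
  | self => exact self_mem_bigOne (F.obj G)
  | shift X _ n ih =>
    exact (IsRetract.of_iso ((F.commShiftIso n).app X)).mem_bigOne (shift_mem_bigOne ih n)
  | coproduct ι f _ ih =>
    have : HasCoproduct fun i ↦ F.obj (f i) :=
      hasColimit_of_iso (Discrete.compNatIsoDiscrete f F).symm
    exact (IsRetract.of_iso (PreservesCoproduct.iso F f)).mem_bigOne (coproduct_mem_bigOne _ ih)
  | retract X Y h _ ih => exact (h.map F).mem_bigOne ih

end BigOne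

section BigLevel

variable [HasZeroObject C] [Preadditive C] [HasShift C ℤ]
  [∀ n : ℤ, (shiftFunctor C n).Additive] [Pretriangulated C]

lemma IsRetract.mem_bigLevel {G X Y : C} {n : ℕ} (h : IsRetract X Y) (hY : Y ∈ bigLevel G n) :
    X ∈ bigLevel G n :=
  match n, hY with
  | 0, hY => h.isZero hY
  | 1, hY => h.mem_bigOne hY
  | _ + 2, ⟨E, A, B, f, g, k, hT, hA, hB, hE⟩ => ⟨E, A, B, f, g, k, hT, hA, hB, h.trans hE⟩

theorem map_mem_bigLevel {D : Type u₂} [Category.{v} D] [HasZeroObject D] [Preadditive D]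
    [HasShift D ℤ] [∀ n : ℤ, (shiftFunctor D n).Additive] [Pretriangulated D]
    (F : C ⥤ D) [F.CommShift ℤ] [F.IsTriangulated]
    [∀ J : Type v, PreservesColimitsOfShape (Discrete J) F] {G X : C} {n : ℕ}
    (hX : X ∈ bigLevel G n) : F.obj X ∈ bigLevel (F.obj G) n :=
  match n, hX with
  | 0, hX => F.map_isZero hX
  | 1, hX => map_mem_bigOne F hX
  | _ + 2, ⟨E, A, B, _, _, _, hT, hA, hB, hE⟩ =>
    ⟨F.obj E, F.obj A, F.obj B, _, _, _, F.map_distinguished _ hT, map_mem_bigLevel F hA,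
      map_mem_bigOne F hB, hE.map F⟩

end BigLevel

theorem statement4_general [HasZeroObject C] [Preadditive C] [HasShift C ℤ]
    [∀ n : ℤ, (shiftFunctor C n).Additive] [Pretriangulated C] [MonoidalCategory C]
    {A : C} {n : ℕ} (h1 : 𝟙_ C ∈ bigLevel A n) (E : C)
    [(tensorRight E).CommShift ℤ] [(tensorRight E).IsTriangulated]
    [∀ J : Type v, PreservesColimitsOfShape (Discrete J) (tensorRight E)] :
    E ∈ bigLevel (A ⊗ E) n := by
  have unit_tensor_mem : 𝟙_ C ⊗ E ∈ bigLevel (A ⊗ E) n := map_mem_bigLevel (tensorRight E) h1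
  exact (IsRetract.of_iso (λ_ E).symm).mem_bigLevel unit_tensor_mem

/--
in a triangulated category with all small coproducts, equipped with a
monoidal structure with unit `𝟙_ C` such that for every object `E` the endofunctor
`(-) ⊗ E` is exact and preserves small coproducts: if `𝟙_ C ∈ ⟨A⟩̄ₙ` for some object `A`
and some `n ≥ 0`, then every object `E` belongs to `⟨A ⊗ E⟩̄ₙ`.
-/
theorem statement4 [HasZeroObject C] [Preadditive C] [HasShift C ℤ]
    [∀ n : ℤ, (shiftFunctor C n).Additive] [Pretriangulated C]
    [HasCoproducts.{v} C] [MonoidalCategory C]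
    [∀ X : C, (tensorRight X).CommShift ℤ] [∀ X : C, (tensorRight X).IsTriangulated]
    [∀ (X : C) (J : Type v), PreservesColimitsOfShape (Discrete J) (tensorRight X)]
    (A : C) (n : ℕ) (h1 : (𝟙_ C) ∈ bigLevel A n) (E : C) :
    E ∈ bigLevel (A ⊗ E) n :=
  statement4_general h1 E

end Stmt
end

section
/- Let R be a commutative Noetherian ring of finite Krull dimension. Then every object E of D(Mod R) whose homology modules are all finitely generated and vanish in all but finitely many degrees belongs to the smallest thick subcategory of D(Mod R) containing the set of objects {R/𝔭 : 𝔭 a prime ideal of R}, each regarded as a complex concentrated in degree 0. (This is the affine case of the paper's Corollary: D^b_coh(X) is classically generated by the structure sheaves of the integral closed subschemes of X.) -/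
/-!
A finitely generated module over a Noetherian ring has a finite filtration with subquotients of
the form `R ⧸ 𝔭`, so a triangulated subcategory containing all `R ⧸ 𝔭` contains every finitely
generated module placed in a single degree. A bounded object is built from its homology objects by
finitely many truncation triangles `τ≤a E ⟶ E ⟶ τ≥(a+1) E ⟶`; the long exact homology sequence
identifies the homology of both truncations with the homology of `E`.
-/

open CategoryTheory Limits Pretriangulated

universe v u v₂ u₂

namespace Stmt

variable {C : Type u} [Category.{v} C]

section Thick

variable [HasZeroObject C] [Preadditive C] [HasShift C ℤ]
  [∀ n : ℤ, (shiftFunctor C n).Additive] [Pretriangulated C]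

/-- A collection of objects of a pretriangulated category is a thick (triangulated)
subcategory when it contains the zero objects, and is closed under shifts, cones of
morphisms between its objects (two-out-of-three for distinguished triangles), and
direct summands (retracts). -/
def IsThickSubcat (S : Set C) : Prop :=
  (∀ X : C, IsZero X → X ∈ S) ∧
  (∀ X ∈ S, ∀ n : ℤ, (X⟦n⟧ : C) ∈ S) ∧
  (∀ T : Triangle C, (T ∈ distTriang C) → T.obj₁ ∈ S → T.obj₂ ∈ S → T.obj₃ ∈ S) ∧
  (∀ X Y : C, Y ∈ S → IsRetract X Y → X ∈ S)

/-- The smallest thick subcategory (as a collection of objects) containing `A`. -/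
def thickClosure (A : Set C) : Set C := ⋂₀ {S : Set C | A ⊆ S ∧ IsThickSubcat S}

end Thick

section ThickToTriangulated

variable [HasZeroObject C] [Preadditive C] [HasShift C ℤ]
  [∀ n : ℤ, (shiftFunctor C n).Additive] [Pretriangulated C] {S : Set C}

lemma IsThickSubcat.isClosedUnderIsomorphisms (hS : IsThickSubcat S) :
    ObjectProperty.IsClosedUnderIsomorphisms (fun X ↦ X ∈ S) where
  of_iso e hX := hS.2.2.2 _ _ hX ⟨e.inv, e.hom, e.inv_hom_id⟩

lemma IsThickSubcat.isTriangulated (hS : IsThickSubcat S) :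
    ObjectProperty.IsTriangulated (fun X ↦ X ∈ S) where
  exists_zero := ⟨_, isZero_zero C, hS.1 _ (isZero_zero C)⟩
  isStableUnderShiftBy n := ⟨fun X hX ↦ hS.2.1 X hX n⟩
  ext₂' _ hT h₁ h₃ := ObjectProperty.le_isoClosure _ _
    (hS.2.2.1 _ (inv_rot_of_distTriang _ hT) (hS.2.1 _ h₃ (-1)) h₁)

end ThickToTriangulated

section Abelian

open DerivedCategory

variable {A : Type*} [Category A] [Abelian A] [HasDerivedCategory A]

lemma isIso_homologyFunctor_map_mor₁ {T : Triangle (DerivedCategory A)} (hT : T ∈ distTriang _)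
    {n₀ n₁ : ℤ} (h : n₀ + 1 = n₁) (h₀ : IsZero ((homologyFunctor A n₀).obj T.obj₃))
    (h₁ : IsZero ((homologyFunctor A n₁).obj T.obj₃)) :
    IsIso ((homologyFunctor A n₁).map T.mor₁) := by
  have : Mono ((homologyFunctor A n₁).map T.mor₁) :=
    (HomologySequence.mono_homologyMap_mor₁_iff _ hT n₀ n₁ h).2 (h₀.eq_of_src _ _)
  have : Epi ((homologyFunctor A n₁).map T.mor₁) :=
    (HomologySequence.epi_homologyMap_mor₁_iff _ hT n₁).2 (h₁.eq_of_tgt _ _)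
  exact isIso_of_mono_of_epi _

lemma isIso_homologyFunctor_map_mor₂ {T : Triangle (DerivedCategory A)} (hT : T ∈ distTriang _)
    {n₀ n₁ : ℤ} (h : n₀ + 1 = n₁) (h₀ : IsZero ((homologyFunctor A n₀).obj T.obj₁))
    (h₁ : IsZero ((homologyFunctor A n₁).obj T.obj₁)) :
    IsIso ((homologyFunctor A n₀).map T.mor₂) := by
  have : Mono ((homologyFunctor A n₀).map T.mor₂) :=
    (HomologySequence.mono_homologyMap_mor₂_iff _ hT n₀).2 (h₀.eq_of_src _ _)
  have : Epi ((homologyFunctor A n₀).map T.mor₂) :=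
    (HomologySequence.epi_homologyMap_mor₂_iff _ hT n₀ n₁ h).2 (h₁.eq_of_tgt _ _)
  exact isIso_of_mono_of_epi _

lemma nonempty_iso_homologyFunctor_truncLE_obj (E : DerivedCategory A) {a m : ℤ} (hm : m ≤ a) :
    Nonempty ((homologyFunctor A m).obj ((TStructure.t.truncLE a).obj E) ≅
      (homologyFunctor A m).obj E) := by
  let Y := (TStructure.t.truncGE (a + 1)).obj E
  let T := (TStructure.t.triangleLEGE a (a + 1) rfl).obj E
  have : IsIso ((homologyFunctor A m).map T.mor₁) := isIso_homologyFunctor_map_mor₁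
    (TStructure.t.triangleLEGE_distinguished a (a + 1) rfl E) (sub_add_cancel m 1)
    (Y.isZero_of_isGE (a + 1) _ (by lia)) (Y.isZero_of_isGE (a + 1) _ (by lia))
  exact ⟨(asIso ((homologyFunctor A m).map T.mor₁) :)⟩

lemma nonempty_iso_homologyFunctor_truncGE_obj (E : DerivedCategory A) {a m : ℤ} (hm : a ≤ m) :
    Nonempty ((homologyFunctor A m).obj ((TStructure.t.truncGE a).obj E) ≅
      (homologyFunctor A m).obj E) := by
  let X := (TStructure.t.truncLE (a - 1)).obj E
  let T := (TStructure.t.triangleLEGE (a - 1) a (sub_add_cancel a 1)).obj E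
  have : IsIso ((homologyFunctor A m).map T.mor₂) := isIso_homologyFunctor_map_mor₂
    (TStructure.t.triangleLEGE_distinguished (a - 1) a (sub_add_cancel a 1) E) rfl
    (X.isZero_of_isLE (a - 1) _ (by lia)) (X.isZero_of_isLE (a - 1) _ (by lia))
  exact ⟨(asIso ((homologyFunctor A m).map T.mor₂)).symm⟩

lemma nonempty_iso_singleFunctor_obj_homologyFunctor_obj (E : DerivedCategory A) (n : ℤ)
    [E.IsGE n] [E.IsLE n] :
    Nonempty (E ≅ (singleFunctor A n).obj ((homologyFunctor A n).obj E)) := by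
  obtain ⟨M, ⟨e⟩⟩ := exists_iso_singleFunctor_obj_of_isGE_of_isLE E n
  let e' : (homologyFunctor A n).obj E ≅ M :=
    (homologyFunctor A n).mapIso e ≪≫ (singleFunctorCompHomologyFunctorIso A n).app M
  exact ⟨e ≪≫ (singleFunctor A n).mapIso e'.symm⟩

lemma bounded_of_finite_homology_support {E : DerivedCategory A}
    (hE : {m : ℤ | ¬ IsZero ((homologyFunctor A m).obj E)}.Finite) :
    TStructure.t.bounded E := by
  obtain ⟨a, ha⟩ := hE.bddBelow
  obtain ⟨b, hb⟩ := hE.bddAbove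
  refine ⟨⟨a, (isGE_iff E a).2 fun i hi ↦ ?_⟩, ⟨b, (isLE_iff E b).2 fun i hi ↦ ?_⟩⟩
  · exact not_not.1 fun h ↦ (ha h).not_gt hi
  · exact not_not.1 fun h ↦ (hb h).not_gt hi

variable (P : ObjectProperty (DerivedCategory A)) [P.IsClosedUnderIsomorphisms]

lemma prop_singleFunctor_obj_iff [P.IsStableUnderShift ℤ] (M : A) (n : ℤ) :
    P ((singleFunctor A n).obj M) ↔ P ((singleFunctor A 0).obj M) :=
  (P.prop_shift_iff_of_isStableUnderShift ((singleFunctor A n).obj M) n).symm.trans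
    (P.prop_iff_of_iso (((singleFunctors A).shiftIso n 0 n (add_zero n)).app M))

lemma prop_of_isGE_of_isLE_self [P.IsStableUnderShift ℤ] (E : DerivedCategory A) (n : ℤ)
    [E.IsGE n] [E.IsLE n]
    (hE : P ((singleFunctor A 0).obj ((homologyFunctor A n).obj E))) : P E := by
  obtain ⟨e⟩ := nonempty_iso_singleFunctor_obj_homologyFunctor_obj E n
  exact P.prop_of_iso e.symm ((prop_singleFunctor_obj_iff P _ n).2 hE)

lemma prop_singleFunctor_obj_homologyFunctor_truncGE [P.ContainsZero] (E : DerivedCategory A)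
    (hE : ∀ m, P ((singleFunctor A 0).obj ((homologyFunctor A m).obj E))) (a m : ℤ) :
    P ((singleFunctor A 0).obj
      ((homologyFunctor A m).obj ((TStructure.t.truncGE a).obj E))) := by
  obtain hm | hm := lt_or_ge m a
  · exact P.prop_of_isZero (Functor.map_isZero _ (isZero_of_isGE _ a m hm))
  · obtain ⟨e⟩ := nonempty_iso_homologyFunctor_truncGE_obj E hm
    exact P.prop_of_iso ((singleFunctor A 0).mapIso e.symm) (hE m)

variable [P.IsTriangulated]

lemma prop_of_isGE_of_isLE {E : DerivedCategory A} (a b : ℤ) [E.IsGE a] [E.IsLE b]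
    (hE : ∀ m, P ((singleFunctor A 0).obj ((homologyFunctor A m).obj E))) : P E := by
  obtain ⟨n, hn⟩ : ∃ n : ℕ, b < a + n := ⟨(b + 1 - a).toNat, by lia⟩
  induction n generalizing a E with
  | zero => exact P.prop_of_isZero (TStructure.t.isZero E b a (by lia))
  | succ n ih =>
    let X := (TStructure.t.truncLE a).obj E
    let Y := (TStructure.t.truncGE (a + 1)).obj E
    have hX : P X := by
      obtain ⟨e⟩ := nonempty_iso_homologyFunctor_truncLE_obj E le_rfl
      exact prop_of_isGE_of_isLE_self P X a
        (P.prop_of_iso ((singleFunctor A 0).mapIso e.symm) (hE a))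
    have hY : P Y := ih (a + 1)
      (prop_singleFunctor_obj_homologyFunctor_truncGE P E hE (a + 1)) (by lia)
    exact P.ext_of_isTriangulatedClosed₂ _
      (TStructure.t.triangleLEGE_distinguished a (a + 1) rfl E) hX hY

lemma prop_of_bounded {E : DerivedCategory A} (hb : TStructure.t.bounded E)
    (hE : ∀ m, P ((singleFunctor A 0).obj ((homologyFunctor A m).obj E))) : P E := by
  obtain ⟨⟨a, _⟩, ⟨b, _⟩⟩ := hb
  exact prop_of_isGE_of_isLE P a b hE

end Abelian

section Noetherian

open DerivedCategory

variable {R : Type u} [CommRing R] [IsNoetherianRing R] [HasDerivedCategory (ModuleCat.{u} R)]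
  (P : ObjectProperty (DerivedCategory (ModuleCat.{u} R))) [P.IsClosedUnderIsomorphisms]

lemma prop_singleFunctor_obj_of_finite [P.ContainsZero] [P.IsTriangulatedClosed₂]
    (hP : ∀ p : Ideal R, p.IsPrime → P ((singleFunctor _ 0).obj (ModuleCat.of R (R ⧸ p))))
    (M : Type u) [AddCommGroup M] [Module R M] [hM : Module.Finite R M] :
    P ((singleFunctor _ 0).obj (ModuleCat.of R M)) := by
  induction hM using IsNoetherianRing.induction_on_isQuotientEquivQuotientPrime R with
  | subsingleton N =>
    exact P.prop_of_isZero (Functor.map_isZero _ (ModuleCat.isZero_of_subsingleton _))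
  | quotient N p f =>
    exact P.prop_of_iso ((singleFunctor _ 0).mapIso f.toModuleIso.symm) (hP p.1 p.2)
  | exact N₁ N₂ N₃ f g hf hg hfg h₁ h₃ =>
    let K : ShortComplex (ModuleCat.{u} R) :=
      .mk (ModuleCat.ofHom f) (ModuleCat.ofHom g) (by ext x; exact hfg.apply_apply_eq_zero x)
    have hK : K.ShortExact := ModuleCat.shortComplex_shortExact _ hfg hf hg
    exact P.ext_of_isTriangulatedClosed₂ _ hK.singleTriangle_distinguished h₁ h₃

theorem statement16_general [P.IsTriangulated]
    (hP : ∀ p : Ideal R, p.IsPrime → P ((singleFunctor _ 0).obj (ModuleCat.of R (R ⧸ p))))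
    (E : DerivedCategory (ModuleCat.{u} R))
    (hfg : ∀ m : ℤ, Module.Finite R ((homologyFunctor (ModuleCat.{u} R) m).obj E))
    (hbdd : {m : ℤ | ¬ IsZero ((homologyFunctor (ModuleCat.{u} R) m).obj E)}.Finite) :
    P E :=
  prop_of_bounded P (bounded_of_finite_homology_support hbdd) fun m ↦
    have := hfg m
    prop_singleFunctor_obj_of_finite P hP ((homologyFunctor (ModuleCat.{u} R) m).obj E)

end Noetherian

/--
let `R` be a commutative Noetherian ring of finite Krull dimension. Then
every object `E` of `D(Mod R)` with bounded finitely generated homology belongs to the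
smallest thick subcategory of `D(Mod R)` containing the set of objects `R ⧸ 𝔭` (in
degree `0`) for `𝔭` ranging over the prime ideals of `R`.
-/
theorem statement16 (R : Type u) [CommRing R] [IsNoetherianRing R]
    (hdim : ringKrullDim R < ⊤)
    [HasDerivedCategory (ModuleCat.{u} R)]
    (E : DerivedCategory (ModuleCat.{u} R))
    (hfg : ∀ m : ℤ,
      Module.Finite R ((DerivedCategory.homologyFunctor (ModuleCat.{u} R) m).obj E))
    (hbdd : {m : ℤ |
      ¬ IsZero ((DerivedCategory.homologyFunctor (ModuleCat.{u} R) m).obj E)}.Finite) :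
    E ∈ thickClosure {X | ∃ (p : Ideal R), p.IsPrime ∧
      X = (DerivedCategory.singleFunctor (ModuleCat.{u} R) 0).obj (ModuleCat.of R (R ⧸ p))} := by
  rintro S ⟨hA, hS⟩
  have := hS.isTriangulated
  have := hS.isClosedUnderIsomorphisms
  exact statement16_general (fun X ↦ X ∈ S) (fun p hp ↦ hA ⟨p, hp, rfl⟩) E hfg hbdd

end Stmt
end
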